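/- arXiv:2405.16814 — 2 statements merged into one kernel-verified Lean document; each statement's English description precedes it below -/
import Mathlib

section
/- For every natural number r ≥ 1, the series ∑_{n=1}^∞ (1/(4^n · α^{rn} · L_r^n)) · binom(2n,n) · H_n equals (2√(α^r L_r)/√(α^r L_r − 1)) · ln((√(α^r L_r) + √(α^r L_r − 1))/(2√(α^r L_r − 1))). -/
/-!
Put `x = α ^ r * L_r > 1`, `y = 1 / x` and `c n = binom(2n, n) / 4 ^ n`. The claim is the
evaluation at `y ∈ (0, 1)` of the generating function `F(y) = ∑ c n * H n * y ^ n`; nothing else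
about Lucas numbers is used.

If a sequence satisfies `(n + 1) a (n + 1) - (n + 1 / 2) a n = e n`, its generating function `f`
solves `(1 - y) f' - f / 2 = ∑ e n y ^ n`, so `√(1 - y) f` has derivative
`(∑ e n y ^ n) / √(1 - y)` (`hasDerivAt_sqrt_mul_gen`).
For `a = c` the right-hand side vanishes, which gives `∑ c n y ^ n = 1 / √(1 - y)` (`gen_cb`).
For `a n = c n * H n` it is `e n = c (n + 1)`, so with `s = √(1 - y)` the function `s * F` has
derivative `1 / (s² (1 + s))`, the derivative of `2 log ((1 + s) / (2 s))` (`gen_cb_H`).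
-/

open Real

/-- The `n`-th harmonic number `H n = ∑_{k=1}^n 1/k`. -/
noncomputable def H (n : ℕ) : ℝ := ∑ k ∈ Finset.range n, 1 / (k + 1 : ℝ)

/-- The golden ratio `α = (1 + √5)/2`. -/
noncomputable def α : ℝ := (1 + Real.sqrt 5) / 2

/-- The Lucas numbers: `L 0 = 2`, `L 1 = 1`, `L (n+2) = L (n+1) + L n`. -/
def lucas : ℕ → ℕ
  | 0 => 2
  | 1 => 1
  | n + 2 => lucas (n + 1) + lucas n

/-! ### Central binomial coefficients and harmonic numbers -/

/-- The normalised central binomial coefficient `binom(2n, n) / 4 ^ n`. -/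
noncomputable def cb (n : ℕ) : ℝ := (Nat.centralBinom n : ℝ) / 4 ^ n

/-- The generating function `∑ a n * y ^ n`, meaningful where the series is summable. -/
noncomputable def gen (a : ℕ → ℝ) (y : ℝ) : ℝ := ∑' n, a n * y ^ n

lemma cb_succ (n : ℕ) : ((n : ℝ) + 1) * cb (n + 1) = (n + 1 / 2) * cb n := by
  have h : ((n : ℝ) + 1) * (Nat.centralBinom (n + 1) : ℝ)
      = 2 * (2 * n + 1) * (Nat.centralBinom n : ℝ) := by
    exact_mod_cast Nat.succ_mul_centralBinom_succ n
  unfold cb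
  rw [pow_succ]
  field_simp
  linear_combination 2 * h

lemma cb_nonneg (n : ℕ) : 0 ≤ cb n := by unfold cb; positivity

lemma cb_zero : cb 0 = 1 := by simp [cb]

lemma cb_le_one (n : ℕ) : cb n ≤ 1 := by
  induction n with
  | zero => exact cb_zero.le
  | succ k ih =>
    have h := cb_succ k
    have hk : (0 : ℝ) ≤ k := Nat.cast_nonneg k
    nlinarith [cb_nonneg k, cb_nonneg (k + 1)]

lemma H_succ (n : ℕ) : H (n + 1) = H n + 1 / (n + 1) := by
  unfold H; rw [Finset.sum_range_succ]

lemma H_nonneg (n : ℕ) : 0 ≤ H n := by unfold H; positivity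

lemma H_le (n : ℕ) : H n ≤ n := by
  induction n with
  | zero => simp [H]
  | succ k ih =>
    rw [H_succ]
    have : 1 / ((k : ℝ) + 1) ≤ 1 := by
      rw [div_le_one (by positivity)]
      linarith [(Nat.cast_nonneg k : (0 : ℝ) ≤ k)]
    push_cast; linarith

lemma abs_cb_le (n : ℕ) : |cb n| ≤ n + 1 := by
  rw [abs_of_nonneg (cb_nonneg n)]
  linarith [cb_le_one n, (Nat.cast_nonneg n : (0 : ℝ) ≤ n)]

lemma abs_cb_H_le (n : ℕ) : |cb n * H n| ≤ n + 1 := by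
  rw [abs_of_nonneg (mul_nonneg (cb_nonneg n) (H_nonneg n))]
  nlinarith [cb_le_one n, cb_nonneg n, H_nonneg n, H_le n]

/-! ### Power series with coefficients of linear growth -/

lemma summable_sq_geometric {y : ℝ} (hy : |y| < 1) :
    Summable fun n : ℕ => ((n : ℝ) + 2) ^ 2 * |y| ^ n := by
  have hn : ‖|y|‖ < 1 := by simpa using hy
  have h2 := summable_pow_mul_geometric_of_norm_lt_one 2 hn
  have h1 := summable_pow_mul_geometric_of_norm_lt_one 1 hn
  have h0 := summable_pow_mul_geometric_of_norm_lt_one 0 hn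
  refine ((h2.add (h1.mul_left 4)).add (h0.mul_left 4)).congr fun n => ?_
  ring

lemma summable_of_sq_bound {a : ℕ → ℝ} (ha : ∀ n, |a n| ≤ ((n : ℝ) + 2) ^ 2)
    {y : ℝ} (hy : |y| < 1) : Summable fun n => a n * y ^ n := by
  refine Summable.of_norm_bounded (summable_sq_geometric hy) fun n => ?_
  rw [Real.norm_eq_abs, abs_mul, abs_pow]
  exact mul_le_mul_of_nonneg_right (ha n) (by positivity)

lemma sq_bound_of_linear {a : ℕ → ℝ} (ha : ∀ n, |a n| ≤ (n : ℝ) + 1) (n : ℕ) :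
    |a n| ≤ ((n : ℝ) + 2) ^ 2 := by
  have hn : (0 : ℝ) ≤ n := Nat.cast_nonneg n
  nlinarith [ha n]

lemma sq_bound_deriv {a : ℕ → ℝ} (ha : ∀ n, |a n| ≤ (n : ℝ) + 1) (n : ℕ) :
    |((n : ℝ) + 1) * a (n + 1)| ≤ ((n : ℝ) + 2) ^ 2 := by
  have hn : (0 : ℝ) ≤ n := Nat.cast_nonneg n
  have h := ha (n + 1)
  push_cast at h
  rw [abs_mul, abs_of_nonneg (by positivity : (0 : ℝ) ≤ n + 1)]
  nlinarith

/-- Termwise differentiation inside the unit disc, for coefficients of linear growth. -/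
lemma hasDerivAt_gen {a : ℕ → ℝ} (ha : ∀ n, |a n| ≤ (n : ℝ) + 1) {y : ℝ} (hy : |y| < 1) :
    HasDerivAt (gen a) (gen (fun n => ((n : ℝ) + 1) * a (n + 1)) y) y := by
  obtain ⟨ρ, h1, h2⟩ := exists_between hy
  have hρ0 : 0 ≤ ρ := (abs_nonneg y).trans h1.le
  have hρ : |ρ| < 1 := by rwa [abs_of_nonneg hρ0]
  -- Only the shifted series is differentiated, so that no exponent `n - 1` appears.
  have key : HasDerivAt (fun z => ∑' n, a (n + 1) * z ^ (n + 1))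
      (∑' n : ℕ, (((n : ℝ) + 1) * a (n + 1)) * y ^ n) y := by
    refine hasDerivAt_tsum_of_isPreconnected
      (g' := fun (n : ℕ) z => (((n : ℝ) + 1) * a (n + 1)) * z ^ n) (t := Set.Ioo (-ρ) ρ) (y₀ := 0)
      (summable_sq_geometric hρ) isOpen_Ioo isPreconnected_Ioo
      (fun n z _ => ?_) (fun n z hz => ?_) ?_ ?_ ?_
    · refine ((hasDerivAt_pow (n + 1) z).const_mul (a (n + 1))).congr_deriv ?_
      push_cast
      ring
    · rw [Real.norm_eq_abs, abs_mul, abs_pow]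
      have hz' : |z| ≤ |ρ| := by rw [abs_of_nonneg hρ0]; exact (abs_lt.2 hz).le
      exact mul_le_mul (sq_bound_deriv ha n) (pow_le_pow_left₀ (abs_nonneg z) hz' n)
        (by positivity) (by positivity)
    · have := abs_nonneg y
      constructor <;> linarith
    · simp
    · exact abs_lt.1 h1
  have hev : gen a =ᶠ[nhds y] fun z => a 0 + ∑' n, a (n + 1) * z ^ (n + 1) := by
    have ho : {z : ℝ | |z| < 1} ∈ nhds y :=
      (isOpen_lt continuous_abs continuous_const).mem_nhds hy
    filter_upwards [ho] with z hz
    unfold gen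
    rw [(summable_of_sq_bound (sq_bound_of_linear ha) hz).tsum_eq_zero_add]
    simp
  exact (key.const_add (a 0)).congr_of_eventuallyEq hev

/-- The recurrence `(n + 1) a (n + 1) - (n + 1 / 2) a n = e n` amounts to
`(1 - y) f' - f / 2 = ∑ e n * y ^ n`, integrated here with the factor `√(1 - y)`. -/
lemma hasDerivAt_sqrt_mul_gen {a e : ℕ → ℝ} (ha : ∀ n, |a n| ≤ (n : ℝ) + 1)
    (he : ∀ n : ℕ, ((n : ℝ) + 1) * a (n + 1) = (n + 1 / 2) * a n + e n)
    {y : ℝ} (hy : |y| < 1) :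
    HasDerivAt (fun z => √(1 - z) * gen a z) (gen e y / √(1 - y)) y := by
  have hy1 : 0 < 1 - y := by linarith [(abs_lt.1 hy).2]
  have hd := hasDerivAt_gen ha hy
  have hs : HasDerivAt (fun z : ℝ => √(1 - z)) (-1 / (2 * √(1 - y))) y :=
    ((hasDerivAt_id y).const_sub 1).sqrt hy1.ne'
  set D := gen (fun n => ((n : ℝ) + 1) * a (n + 1)) y with hD
  have sa := summable_of_sq_bound (sq_bound_of_linear ha) hy
  have sd := summable_of_sq_bound (sq_bound_deriv ha) hy
  have hna : HasSum (fun n : ℕ => (n : ℝ) * a n * y ^ n) (y * D) := by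
    rw [← hasSum_nat_add_iff' 1]
    simp only [Finset.range_one, Finset.sum_singleton, Nat.cast_zero, zero_mul, sub_zero]
    have hfun : (fun n : ℕ => ((n + 1 : ℕ) : ℝ) * a (n + 1) * y ^ (n + 1))
        = fun n : ℕ => y * (((n : ℝ) + 1) * a (n + 1) * y ^ n) := by
      funext n
      push_cast
      ring
    rw [hfun]
    exact sd.hasSum.mul_left y
  have hode : gen e y = D - y * D - gen a y / 2 := by
    refine HasSum.tsum_eq ?_
    have hfun : (fun n : ℕ => e n * y ^ n) = fun n : ℕ =>
        ((n : ℝ) + 1) * a (n + 1) * y ^ n - (n : ℝ) * a n * y ^ n - a n * y ^ n / 2 := by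
      funext n
      rw [he n]
      ring
    rw [hfun]
    exact (sd.hasSum.sub hna).sub (sa.hasSum.div_const 2)
  refine (hs.mul hd).congr_deriv ?_
  have hsq : √(1 - y) ^ 2 = 1 - y := Real.sq_sqrt hy1.le
  have hpos : 0 < √(1 - y) := Real.sqrt_pos.2 hy1
  rw [hode]
  field_simp
  rw [hsq]
  ring

lemma gen_at_zero (a : ℕ → ℝ) : gen a 0 = a 0 := by
  unfold gen
  rw [tsum_eq_single 0 (fun n hn => by simp [hn])]
  simp

/-- Two functions on `(-1, 1)` with the same derivative and the same value at `0` agree. -/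
lemma eq_of_hasDerivAt {f g f' : ℝ → ℝ} (hf : ∀ y, |y| < 1 → HasDerivAt f (f' y) y)
    (hg : ∀ y, |y| < 1 → HasDerivAt g (f' y) y) (h0 : f 0 = g 0) {y : ℝ} (hy : |y| < 1) :
    f y = g y := by
  have hm : ∀ z ∈ Set.Ioo (-1 : ℝ) 1, |z| < 1 := fun z hz => abs_lt.2 hz
  refine isOpen_Ioo.eqOn_of_deriv_eq (s := Set.Ioo (-1 : ℝ) 1) isPreconnected_Ioo
    (fun z hz => (hf z (hm z hz)).differentiableAt.differentiableWithinAt)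
    (fun z hz => (hg z (hm z hz)).differentiableAt.differentiableWithinAt)
    (fun z hz => ?_) (x := 0) (by norm_num) h0 (abs_lt.1 hy)
  rw [(hf z (hm z hz)).deriv, (hg z (hm z hz)).deriv]

/-! ### The two generating functions -/

lemma gen_cb {y : ℝ} (hy : |y| < 1) : √(1 - y) * gen cb y = 1 := by
  refine eq_of_hasDerivAt (f := fun z => √(1 - z) * gen cb z) (g := fun _ => 1) (f' := fun _ => 0)
    (fun z hz => ?_) (fun z _ => hasDerivAt_const z 1) ?_ hy
  · have := hasDerivAt_sqrt_mul_gen (a := cb) (e := fun _ => 0) abs_cb_le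
      (fun n => by rw [cb_succ, add_zero]) hz
    simpa [gen] using this
  · simp [gen_at_zero, cb_zero]

/-- The shifted series is `(1 / √(1 - y) - 1) / y`, in a form that is also valid at `y = 0`. -/
lemma gen_cb_shift {y : ℝ} (hy : |y| < 1) :
    gen (fun n => cb (n + 1)) y = 1 / (√(1 - y) * (1 + √(1 - y))) := by
  have hy1 : 0 < 1 - y := by linarith [(abs_lt.1 hy).2]
  have hpos : 0 < √(1 - y) := Real.sqrt_pos.2 hy1
  have hsq : √(1 - y) ^ 2 = 1 - y := Real.sq_sqrt hy1.le
  rcases eq_or_ne y 0 with rfl | h0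
  · rw [gen_at_zero]
    have := cb_succ 0
    rw [cb_zero] at this
    norm_num at this ⊢
    linarith
  · have h1 := gen_cb hy
    have h2 : gen cb y = 1 + y * gen (fun n => cb (n + 1)) y := by
      unfold gen
      rw [(summable_of_sq_bound (sq_bound_of_linear abs_cb_le) hy).tsum_eq_zero_add,
        ← tsum_mul_left, cb_zero]
      simp only [pow_zero, mul_one]
      congr 1
      refine tsum_congr fun n => ?_
      ring
    rw [h2] at h1
    rw [eq_div_iff (by positivity)]
    apply mul_left_cancel₀ h0
    linear_combination (1 + √(1 - y)) * h1 - hsq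

lemma gen_cb_H {y : ℝ} (hy : |y| < 1) :
    √(1 - y) * gen (fun n => cb n * H n) y = 2 * Real.log ((1 + √(1 - y)) / (2 * √(1 - y))) := by
  refine eq_of_hasDerivAt (f := fun z => √(1 - z) * gen (fun n => cb n * H n) z)
    (g := fun z => 2 * Real.log ((1 + √(1 - z)) / (2 * √(1 - z))))
    (f' := fun z => gen (fun n => cb (n + 1)) z / √(1 - z))
    (fun z hz => ?_) (fun z hz => ?_) ?_ hy
  · refine hasDerivAt_sqrt_mul_gen abs_cb_H_le (fun n => ?_) hz
    have h := cb_succ n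
    have hn : ((n : ℝ) + 1) * (1 / (n + 1)) = 1 := mul_one_div_cancel (by positivity)
    rw [H_succ]
    linear_combination H n * h + cb (n + 1) * hn
  · have hz1 : 0 < 1 - z := by linarith [(abs_lt.1 hz).2]
    have hpos : 0 < √(1 - z) := Real.sqrt_pos.2 hz1
    have hs : HasDerivAt (fun z : ℝ => √(1 - z)) (-1 / (2 * √(1 - z))) z :=
      ((hasDerivAt_id z).const_sub 1).sqrt hz1.ne'
    have hq := (((hs.const_add 1).div (hs.const_mul 2) (by positivity)).log
      (by simp only [Pi.div_apply]; positivity)).const_mul 2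
    refine hq.congr_deriv ?_
    rw [gen_cb_shift hz]
    simp only [Pi.div_apply]
    field_simp
    ring
  · simp [gen_at_zero, H]

/-! ### Evaluation at the golden ratio and Lucas numbers -/

lemma one_lt_alpha : 1 < α := by
  unfold α
  have : (1 : ℝ) < √5 := by
    rw [Real.lt_sqrt (by norm_num)]; norm_num
  linarith

lemma lucas_pos : ∀ n, 0 < lucas n
  | 0 => by simp [lucas]
  | 1 => by simp [lucas]
  | n + 2 => by
    rw [lucas]
    exact Nat.add_pos_left (lucas_pos (n + 1)) _

theorem stmt_1 (r : ℕ) (hr : 1 ≤ r) :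
    ∑' n : ℕ,
        (1 / ((4 : ℝ) ^ (n + 1) * α ^ (r * (n + 1)) * ((lucas r : ℝ)) ^ (n + 1))) *
        (Nat.choose (2 * (n + 1)) (n + 1) : ℝ) * H (n + 1)
      = 2 * Real.sqrt (α ^ r * (lucas r : ℝ)) / Real.sqrt (α ^ r * (lucas r : ℝ) - 1) *
        Real.log ((Real.sqrt (α ^ r * (lucas r : ℝ)) + Real.sqrt (α ^ r * (lucas r : ℝ) - 1)) /
          (2 * Real.sqrt (α ^ r * (lucas r : ℝ) - 1))) := by
  have hx : 1 < α ^ r * (lucas r : ℝ) := by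
    have h1 : 1 < α ^ r := one_lt_pow₀ one_lt_alpha (by omega)
    have h2 : (1 : ℝ) ≤ lucas r := by exact_mod_cast lucas_pos r
    nlinarith
  have hterm : ∀ n : ℕ, (1 / ((4 : ℝ) ^ (n + 1) * α ^ (r * (n + 1)) * ((lucas r : ℝ)) ^ (n + 1))) *
        (Nat.choose (2 * (n + 1)) (n + 1) : ℝ) * H (n + 1)
      = cb (n + 1) * H (n + 1) * ((α ^ r * (lucas r : ℝ))⁻¹) ^ (n + 1) := by
    intro n
    rw [cb, Nat.centralBinom_eq_two_mul_choose, pow_mul, inv_pow, mul_pow, div_eq_mul_inv,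
      div_eq_mul_inv, mul_inv, mul_inv, mul_inv]
    ring
  simp_rw [hterm]
  generalize α ^ r * (lucas r : ℝ) = x at hx
  have hx0 : 0 < x := by linarith
  have hy : |x⁻¹| < 1 := by
    rw [abs_of_pos (by positivity)]; exact inv_lt_one_of_one_lt₀ hx
  have hgen : gen (fun n => cb n * H n) x⁻¹
      = ∑' n : ℕ, cb (n + 1) * H (n + 1) * x⁻¹ ^ (n + 1) := by
    unfold gen
    rw [(summable_of_sq_bound (sq_bound_of_linear abs_cb_H_le) hy).tsum_eq_zero_add]
    simp [H]
  rw [← hgen]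
  have hmain := gen_cb_H hy
  have hs : √(1 - x⁻¹) = √(x - 1) / √x := by
    rw [← Real.sqrt_div (by linarith)]
    congr 1
    field_simp
  have hp : 0 < √x := Real.sqrt_pos.2 hx0
  have hq : 0 < √(x - 1) := Real.sqrt_pos.2 (by linarith)
  rw [hs] at hmain
  have harg : (1 + √(x - 1) / √x) / (2 * (√(x - 1) / √x)) = (√x + √(x - 1)) / (2 * √(x - 1)) := by
    field_simp
  rw [harg] at hmain
  rw [div_mul_eq_mul_div, eq_div_iff hq.ne']
  have h3 := congrArg (fun t => √x * t) hmain
  rw [show √x * (√(x - 1) / √x * gen (fun n => cb n * H n) x⁻¹)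
    = gen (fun n => cb n * H n) x⁻¹ * √(x - 1) by field_simp] at h3
  rw [h3]
  ring
end

section
/- For every real number x with 0 < |x| < 1/4, the series ∑_{n=1}^∞ binom(2n,n) · (H_{2n} − (1/2)H_n) · x^n equals −(1/√(1−4x)) · ln √(1−4x). -/
/-!
Write `a n = binom(2n, n)` and `O n = ∑_{k<n} 1/(2k+1)`, so that `H_{2n} - H_n/2 = O n`, and let
`A`, `B` be the generating functions of `a n` and `b n = a n * O n`. The recurrence
`(n+1) a (n+1) = (4n+2) a n` gives `(n+1) b (n+1) = (4n+2) b n + 2 a n`. On coefficients bounded by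
`(n+1) 4^n`, such recurrences become differential equations on `|x| < 1/4`
(`exists_hasDerivAt_powerSeries`): `(1-4x) A' = 2A` and `(1-4x) B' = 2B + 2A`. Hence
`√(1-4x) A` is constant, equal to `1`, and then `√(1-4x) B + log √(1-4x)` has derivative zero and
vanishes at `0`, which is the claim.
-/

open Real

/-- The sum of the reciprocals of the first `n` odd numbers. -/
noncomputable def oddHarmonic (n : ℕ) : ℝ := ∑ k ∈ Finset.range n, 1 / (2 * k + 1 : ℝ)

lemma oddHarmonic_succ (n : ℕ) : oddHarmonic (n + 1) = oddHarmonic n + 1 / (2 * n + 1 : ℝ) :=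
  Finset.sum_range_succ _ _

lemma H_two_mul_sub (n : ℕ) : H (2 * n) - (1 / 2) * H n = oddHarmonic n := by
  induction n with
  | zero => simp [H, oddHarmonic]
  | succ n ih =>
    rw [oddHarmonic_succ, ← ih, show 2 * (n + 1) = 2 * n + 1 + 1 by ring]
    simp only [H, Finset.sum_range_succ]
    push_cast
    field_simp
    ring

lemma oddHarmonic_nonneg (n : ℕ) : 0 ≤ oddHarmonic n :=
  Finset.sum_nonneg fun _ _ => by positivity

lemma oddHarmonic_le (n : ℕ) : oddHarmonic n ≤ n := by
  induction n with
  | zero => simp [oddHarmonic]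
  | succ n ih =>
    rw [oddHarmonic_succ]
    have : 1 / (2 * n + 1 : ℝ) ≤ 1 := by
      rw [div_le_one (by positivity)]
      linarith [Nat.cast_nonneg (α := ℝ) n]
    push_cast
    linarith

lemma centralBinom_le (n : ℕ) : (n.centralBinom : ℝ) ≤ 4 ^ n := by
  have h := Nat.choose_le_two_pow (2 * n) n
  rw [pow_mul] at h
  rw [Nat.centralBinom_eq_two_mul_choose]
  exact_mod_cast h

lemma centralBinom_rec (n : ℕ) :
    ((n : ℝ) + 1) * ((n + 1).centralBinom : ℝ) = (4 * n + 2) * n.centralBinom := by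
  have h := Nat.succ_mul_centralBinom_succ n
  have h' : ((n : ℝ) + 1) * ((n + 1).centralBinom : ℝ) = 2 * (2 * n + 1) * n.centralBinom := by
    exact_mod_cast h
  rw [h']
  ring

lemma summable_majorant {r : ℝ} (hr : |r| < 1 / 4) :
    Summable fun n : ℕ => ((n : ℝ) + 1) * ((n : ℝ) + 2) * (4 * r) ^ n := by
  have h4 : ‖4 * r‖ < 1 := by
    rw [Real.norm_eq_abs, abs_mul, abs_of_pos (by norm_num : (0 : ℝ) < 4)]
    linarith
  have h2 := summable_pow_mul_geometric_of_norm_lt_one 2 h4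
  have h1 := summable_pow_mul_geometric_of_norm_lt_one 1 h4
  have h0 := summable_pow_mul_geometric_of_norm_lt_one 0 h4
  refine ((h2.add (h1.mul_left 3)).add (h0.mul_left 2)).congr fun n => ?_
  ring

lemma summable_powerSeries {c : ℕ → ℝ} (hc : ∀ n, |c n| ≤ (n + 1) * 4 ^ n) {x : ℝ}
    (hx : |x| < 1 / 4) : Summable fun n => c n * x ^ n := by
  refine Summable.of_norm_bounded (summable_majorant (r := |x|) (by rwa [abs_abs])) fun n => ?_
  rw [Real.norm_eq_abs, abs_mul, abs_pow, mul_pow]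
  have hn : (0 : ℝ) ≤ n := n.cast_nonneg
  calc |c n| * |x| ^ n ≤ ((n + 1) * 4 ^ n) * |x| ^ n := by gcongr; exact hc n
    _ = (n + 1) * 1 * (4 ^ n * |x| ^ n) := by ring
    _ ≤ (n + 1) * (n + 2) * (4 ^ n * |x| ^ n) := by gcongr; linarith

/-- The recurrence `(n+1) c (n+1) = (4n+2) c n + e n` on coefficients translates to the
differential equation `(1 - 4x) C' = 2 C + E` on generating functions. -/
lemma exists_hasDerivAt_powerSeries {c e : ℕ → ℝ} (hc : ∀ n, |c n| ≤ (n + 1) * 4 ^ n)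
    (hrec : ∀ n : ℕ, ((n : ℝ) + 1) * c (n + 1) = (4 * n + 2) * c n + e n) {x : ℝ}
    (hx : |x| < 1 / 4) (he : Summable fun n => e n * x ^ n) :
    ∃ D, HasDerivAt (fun y => ∑' n, c n * y ^ n) D x ∧
      (1 - 4 * x) * D = 2 * ∑' n, c n * x ^ n + ∑' n, e n * x ^ n := by
  -- termwise differentiation is uniformly dominated on a ball of radius `r` between `|x|` and `1/4`
  obtain ⟨r, hxr, hr⟩ := exists_between hx
  have hr0 : 0 ≤ r := (abs_nonneg x).trans hxr.le
  have hu : Summable fun n : ℕ => ((n : ℝ) + 1) * 4 ^ n * (n * r ^ (n - 1)) := by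
    rw [← summable_nat_add_iff 1]
    refine ((summable_majorant (r := r) (by rwa [abs_of_nonneg hr0])).mul_left 4).congr
      fun n => ?_
    rw [mul_pow]
    push_cast
    ring
  have hbound : ∀ (n : ℕ) (y : ℝ), y ∈ Metric.ball (0 : ℝ) r →
      ‖c n * (n * y ^ (n - 1))‖ ≤ ((n : ℝ) + 1) * 4 ^ n * (n * r ^ (n - 1)) := by
    intro n y hy
    rw [mem_ball_zero_iff, Real.norm_eq_abs] at hy
    rw [Real.norm_eq_abs, abs_mul, abs_mul, abs_pow, Nat.abs_cast]
    gcongr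
    exact hc n
  have hxm : x ∈ Metric.ball (0 : ℝ) r := by rwa [mem_ball_zero_iff, Real.norm_eq_abs]
  have hD := hasDerivAt_tsum_of_isPreconnected hu Metric.isOpen_ball
    (convex_ball (0 : ℝ) r).isPreconnected
    (g := fun n y => c n * y ^ n) (g' := fun n y => c n * (n * y ^ (n - 1)))
    (fun n y _ => (hasDerivAt_pow n y).const_mul (c n)) hbound hxm
    (summable_powerSeries hc hx) hxm
  refine ⟨_, hD, ?_⟩
  have hS : Summable fun n : ℕ => c n * (n * x ^ (n - 1)) :=
    Summable.of_norm_bounded hu fun n => hbound n x hxm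
  have hmul : x * ∑' n : ℕ, c n * (n * x ^ (n - 1)) = ∑' n : ℕ, x * (c n * (n * x ^ (n - 1))) :=
    tsum_mul_left.symm
  have hshift : ∑' n : ℕ, c n * (n * x ^ (n - 1)) =
      4 * ∑' n : ℕ, x * (c n * (n * x ^ (n - 1))) + 2 * ∑' n, c n * x ^ n
        + ∑' n, e n * x ^ n := by
    have hSx := (hS.mul_left x).mul_left 4
    have hS2 := (summable_powerSeries hc hx).mul_left 2
    rw [hS.tsum_eq_zero_add, ← tsum_mul_left, ← tsum_mul_left, ← hSx.tsum_add hS2,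
      ← (hSx.add hS2).tsum_add he]
    simp only [Nat.cast_zero, zero_mul, mul_zero, zero_add]
    refine tsum_congr fun n => ?_
    have h := hrec n
    have hp : x * (c n * (n * x ^ (n - 1))) = n * c n * x ^ n := by
      rcases n with _ | n
      · simp
      · rw [Nat.add_sub_cancel, pow_succ]; ring
    rw [hp, Nat.add_sub_cancel]
    push_cast
    linear_combination x ^ n * h
  linear_combination hshift - 4 * hmul

lemma eq_value_zero_of_hasDerivAt {f : ℝ → ℝ}
    (hf : ∀ x : ℝ, |x| < 1 / 4 → HasDerivAt f 0 x) {x : ℝ} (hx : |x| < 1 / 4) : f x = f 0 := by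
  have hm : ∀ y : ℝ, y ∈ Metric.ball (0 : ℝ) (1 / 4) ↔ |y| < 1 / 4 := fun y => by
    rw [mem_ball_zero_iff, Real.norm_eq_abs]
  refine Metric.isOpen_ball.is_const_of_deriv_eq_zero (s := Metric.ball (0 : ℝ) (1 / 4))
    (convex_ball (0 : ℝ) (1 / 4)).isPreconnected
    (fun y hy => (hf y ((hm y).1 hy)).differentiableAt.differentiableWithinAt)
    (fun y hy => (hf y ((hm y).1 hy)).deriv) ((hm x).2 hx) ((hm 0).2 (by norm_num))

lemma one_sub_pos {x : ℝ} (hx : |x| < 1 / 4) : 0 < 1 - 4 * x := by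
  linarith [(abs_lt.1 hx).2]

lemma hasDerivAt_sqrt_one_sub {x : ℝ} (hx : |x| < 1 / 4) :
    HasDerivAt (fun y => √(1 - 4 * y)) (-2 / √(1 - 4 * x)) x := by
  have h : HasDerivAt (fun y : ℝ => 1 - 4 * y) (-4) x := by
    simpa using ((hasDerivAt_id x).const_mul 4).const_sub 1
  convert h.sqrt (one_sub_pos hx).ne' using 1
  have := (Real.sqrt_pos.2 (one_sub_pos hx)).ne'
  field_simp
  norm_num

lemma abs_centralBinom_le (n : ℕ) : |(n.centralBinom : ℝ)| ≤ (n + 1) * 4 ^ n := by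
  rw [Nat.abs_cast]
  have h4 : (0 : ℝ) < 4 ^ n := by positivity
  nlinarith [centralBinom_le n, mul_nonneg (Nat.cast_nonneg (α := ℝ) n) h4.le]

/-- The generating function of the central binomial coefficients is `1 / √(1 - 4x)`. -/
lemma sqrt_mul_tsum_centralBinom {x : ℝ} (hx : |x| < 1 / 4) :
    √(1 - 4 * x) * ∑' n : ℕ, (n.centralBinom : ℝ) * x ^ n = 1 := by
  have key := eq_value_zero_of_hasDerivAt
    (f := fun x => √(1 - 4 * x) * ∑' n : ℕ, (n.centralBinom : ℝ) * x ^ n) ?_ hx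
  · rw [key, tsum_eq_single 0 (fun n hn => by simp [hn])]
    simp
  · intro y hy
    obtain ⟨D, hD, hode⟩ := exists_hasDerivAt_powerSeries (e := fun _ => 0) abs_centralBinom_le
      (fun n => by rw [centralBinom_rec, add_zero]) hy (by simp)
    refine ((hasDerivAt_sqrt_one_sub hy).mul hD).congr_deriv ?_
    have hs := Real.sqrt_pos.2 (one_sub_pos hy)
    have hsq := Real.sq_sqrt (one_sub_pos hy).le
    simp only [zero_mul, tsum_zero, add_zero] at hode
    rw [← hsq] at hode
    field_simp
    linear_combination hode

lemma abs_centralBinom_mul_le (n : ℕ) :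
    |(n.centralBinom : ℝ) * oddHarmonic n| ≤ (n + 1) * 4 ^ n := by
  rw [abs_mul, Nat.abs_cast, abs_of_nonneg (oddHarmonic_nonneg n), mul_comm]
  gcongr
  · linarith [oddHarmonic_le n]
  · exact centralBinom_le n

lemma sqrt_mul_tsum_centralBinom_mul {x : ℝ} (hx : |x| < 1 / 4) :
    √(1 - 4 * x) * ∑' n : ℕ, (n.centralBinom : ℝ) * oddHarmonic n * x ^ n =
      -Real.log √(1 - 4 * x) := by
  have key := eq_value_zero_of_hasDerivAt
    (f := fun x => √(1 - 4 * x) * ∑' n : ℕ, (n.centralBinom : ℝ) * oddHarmonic n * x ^ n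
      + Real.log √(1 - 4 * x)) ?_ hx
  · have h0 : ∑' n : ℕ, (n.centralBinom : ℝ) * oddHarmonic n * (0 : ℝ) ^ n = 0 := by
      rw [tsum_eq_single 0 (fun n hn => by simp [hn])]
      simp [oddHarmonic]
    simp only [h0] at key
    norm_num at key
    linarith
  · intro y hy
    have hA := (summable_powerSeries abs_centralBinom_le hy).mul_left 2
    obtain ⟨D, hD, hode⟩ := exists_hasDerivAt_powerSeries
      (e := fun n => 2 * (n.centralBinom : ℝ)) abs_centralBinom_mul_le
      (fun n => by
        rw [oddHarmonic_succ, ← mul_assoc, centralBinom_rec]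
        field_simp
        ring) hy (hA.congr fun n => by ring)
    have hs := Real.sqrt_pos.2 (one_sub_pos hy)
    have hsq := Real.sq_sqrt (one_sub_pos hy).le
    have h1 := sqrt_mul_tsum_centralBinom hy
    refine (((hasDerivAt_sqrt_one_sub hy).mul hD).add
      ((hasDerivAt_sqrt_one_sub hy).log hs.ne')).congr_deriv ?_
    simp only [mul_assoc (2 : ℝ), tsum_mul_left] at hode
    rw [← hsq] at hode
    field_simp
    linear_combination √(1 - 4 * y) * hode + 2 * h1

theorem stmt_8 (x : ℝ) (hx0 : 0 < |x|) (hx : |x| < 1 / 4) :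
    ∑' n : ℕ,
        (Nat.choose (2 * (n + 1)) (n + 1) : ℝ) * (H (2 * (n + 1)) - (1 / 2) * H (n + 1)) *
          x ^ (n + 1)
      = -(1 / Real.sqrt (1 - 4 * x)) * Real.log (Real.sqrt (1 - 4 * x)) := by
  have h := sqrt_mul_tsum_centralBinom_mul hx
  -- the term of index `0` vanishes, so the sum may start at `1`
  rw [(summable_powerSeries abs_centralBinom_mul_le hx).tsum_eq_zero_add] at h
  simp only [H_two_mul_sub, ← Nat.centralBinom_eq_two_mul_choose]
  have hs := Real.sqrt_pos.2 (one_sub_pos hx)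
  have h0 : oddHarmonic 0 = 0 := by simp [oddHarmonic]
  rw [h0, mul_zero, zero_mul, zero_add] at h
  field_simp
  linear_combination h
end
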